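/- Let (X_n, n ∈ ℕ) and X be compact rooted weighted metric spaces that are also complete locally compact length spaces (i.e. elements of 𝕂 ∩ 𝕃). Then X_n converges to X in (𝕂, d^c_GHP) if and only if X_n converges to X in (𝕃, d_GHP). In particular, d^c_GHP and d_GHP define the same topology on 𝕂 ∩ 𝕃. -/

import Mathlib

/-!
Write `f r` for `dcGHP (X.restrict r) (Y.restrict r)` and `ballMass X r` for the mass of the closed
ball of radius `r` around the root of `X`.

**Measurability.** The integrand defining `dGHP` has to be measurable, as otherwise the integral
would take the junk value `0`. In a length space a point of the ball of radius `s` is within (almost)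
`s - r` of the ball of radius `r ≤ s`, so `dcGHP (X.restrict r) (X.restrict s)` is at most
`(s - r) + (ballMass X s - ballMass X r)` (`dcGHP_restrict_restrict_le`). By the triangle inequality
(`dcGHP_triangle`, proved by gluing ambient spaces), the increments of `f` are dominated by those
of a monotone function, so `f` is a difference of monotone functions (`measurable_dcGHP_restrict`).

**From `dcGHP` to `dGHP`.** If `dcGHP X Y < ε`, restricting a good embedding to the balls gives
`f r ≤ 6 ε + ballMass Y (r + 2 ε) - ballMass Y (r - 2 ε)` (`dcGHP_restrict_le`). The monotone
function `ballMass Y` has at most countably many discontinuities, so the balls converge for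
almost every radius, and dominated convergence applies.

**From `dGHP` to `dcGHP`.** Let the limit `Y` lie within `D` of its root. If `r ≥ D + 1` and
`f r < 1/4`, then no point of `X` is at distance exactly `r` from the root; since `X` is a length
space, `X` is contained in its ball of radius `r` and `dcGHP X Y ≤ f r`. Hence
`min (dcGHP X Y) (1/4) ≤ f r` on `[D + 1, D + 2]` (`min_dcGHP_le_restrict`), and integrating gives
`exp (-(D + 2)) * min (dcGHP X Y) (1/4) ≤ dGHP X Y` (`min_dcGHP_le_dGHP`).
-/


open Metric Set

/-- A rooted weighted metric space: a metric space with a distinguished root and a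
Borel measure. -/
structure RWSpace : Type 1 where
  carrier : Type
  [met : MetricSpace carrier]
  [mble : MeasurableSpace carrier]
  [bor : BorelSpace carrier]
  root : carrier
  vol : MeasureTheory.Measure carrier

attribute [instance] RWSpace.met RWSpace.mble RWSpace.bor

open MeasureTheory

/-- Two rooted weighted metric spaces are GHP-isometric if there is a root-preserving,
measure-preserving isometric bijection between them. -/
def GHPIsometric (X Y : RWSpace) : Prop :=
  ∃ e : X.carrier ≃ᵢ Y.carrier, e X.root = Y.root ∧ Measure.map (⇑e) X.vol = Y.vol

/-- The set of costs of embeddings of `X` and `Y` into a common Polish metric space: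
Hausdorff distance of images + distance of roots + Prohorov distance of pushforwards. -/
def ghpSet (X Y : RWSpace) : Set ℝ :=
  {c : ℝ | ∃ (Z : Type) (_ : MetricSpace Z) (_ : MeasurableSpace Z) (_ : BorelSpace Z)
      (Φ : X.carrier → Z) (Φ' : Y.carrier → Z),
        Isometry Φ ∧ Isometry Φ' ∧ CompleteSpace Z ∧ TopologicalSpace.SeparableSpace Z ∧
        c = hausdorffDist (Set.range Φ) (Set.range Φ') + dist (Φ X.root) (Φ' Y.root)
            + levyProkhorovDist (Measure.map Φ X.vol) (Measure.map Φ' Y.vol)}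

/-- The Gromov–Hausdorff–Prohorov distance between two (compact) rooted weighted
metric spaces. -/
noncomputable def dcGHP (X Y : RWSpace) : ℝ := sInf (ghpSet X Y)

/-- `X` is a compact rooted weighted metric space (with finite measure). -/
def IsCompactRW (X : RWSpace) : Prop :=
  CompactSpace X.carrier ∧ MeasureTheory.IsFiniteMeasure X.vol

/-- A metric space is a length space when the distance between two points is the infimum
of lengths (total variations) of continuous curves joining them. -/
def IsLengthSpace (E : Type) [MetricSpace E] : Prop :=
  ∀ x y : E, edist x y =
    ⨅ (γ : ℝ → E) (_ : ContinuousOn γ (Set.Icc 0 1)) (_ : γ 0 = x) (_ : γ 1 = y),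
      eVariationOn γ (Set.Icc 0 1)

/-- `X` is a rooted weighted complete locally compact length space with locally finite
measure (an element of 𝕃). -/
def IsLLC (X : RWSpace) : Prop :=
  CompleteSpace X.carrier ∧ LocallyCompactSpace X.carrier ∧ IsLengthSpace X.carrier ∧
    MeasureTheory.IsLocallyFiniteMeasure X.vol

/-- The restriction `X^(r)` of a rooted weighted metric space to the closed ball of
radius `r` (`r ≥ 0`) around the root, with restricted metric and measure. -/
noncomputable def RWSpace.restrict (X : RWSpace) (r : ℝ) : RWSpace where
  carrier := Metric.closedBall X.root (max r 0)
  root := ⟨X.root, Metric.mem_closedBall_self (le_max_right r 0)⟩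
  vol := MeasureTheory.Measure.comap Subtype.val X.vol

/-- The Gromov–Hausdorff–Prohorov distance on rooted weighted complete locally compact
length spaces: `d_GHP(X,Y) = ∫_0^∞ e^{-r} (1 ∧ d^c_GHP(X^(r),Y^(r))) dr`. -/
noncomputable def dGHP (X Y : RWSpace) : ℝ :=
  ∫ r in Set.Ioi (0:ℝ), Real.exp (-r) * min (dcGHP (X.restrict r) (Y.restrict r)) 1

/-- The distance function of a bundled metric space structure. -/
noncomputable def mdist {A : Type 1} (m : MetricSpace A) : A → A → ℝ :=
  letI := m; dist

/-- Completeness w.r.t. a bundled metric space structure. -/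
def MSComplete {A : Type 1} (m : MetricSpace A) : Prop := letI := m; CompleteSpace A

/-- Separability w.r.t. a bundled metric space structure. -/
def MSSeparable {A : Type 1} (m : MetricSpace A) : Prop :=
  letI := m; TopologicalSpace.SeparableSpace A

/-! ### Prohorov distance in terms of real-valued measures -/

theorem lp_le {Z : Type} [MetricSpace Z] [MeasurableSpace Z] (μ ν : Measure Z)
    [IsFiniteMeasure μ] [IsFiniteMeasure ν] {δ : ℝ} (hδ : 0 ≤ δ)
    (h : ∀ ε, δ < ε → ∀ B, MeasurableSet B →
      μ.real B ≤ ν.real (thickening ε B) + ε ∧ ν.real B ≤ μ.real (thickening ε B) + ε) :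
    levyProkhorovDist μ ν ≤ δ := by
  have key : ∀ (μ ν : Measure Z) [IsFiniteMeasure μ] [IsFiniteMeasure ν] (ε : ENNReal) (B : Set Z),
      ε < ⊤ → μ.real B ≤ ν.real (thickening ε.toReal B) + ε.toReal →
      μ B ≤ ν (thickening ε.toReal B) + ε := by
    intro μ ν _ _ ε B ht h
    have := ENNReal.ofReal_le_ofReal h
    rwa [ENNReal.ofReal_add measureReal_nonneg ENNReal.toReal_nonneg,
      ENNReal.ofReal_toReal ht.ne, ofReal_measureReal, ofReal_measureReal] at this
  refine ENNReal.toReal_le_of_le_ofReal hδ (levyProkhorovEDist_le_of_forall _ _ _ ?_)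
  intro ε B h1 h2 hB
  have h3 : δ < ε.toReal := (ENNReal.ofReal_lt_iff_lt_toReal hδ h2.ne).1 h1
  exact ⟨key _ _ _ _ h2 (h _ h3 B hB).1, key _ _ _ _ h2 (h _ h3 B hB).2⟩

theorem le_of_lp_lt {Z : Type} [MetricSpace Z] [MeasurableSpace Z] (μ ν : Measure Z)
    [IsFiniteMeasure μ] [IsFiniteMeasure ν] {ε : ℝ} (h : levyProkhorovDist μ ν < ε)
    {B : Set Z} (hB : MeasurableSet B) :
    μ.real B ≤ ν.real (thickening ε B) + ε := by
  have h0 : 0 ≤ ε := ENNReal.toReal_nonneg.trans h.le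
  have h1 : levyProkhorovEDist μ ν < ENNReal.ofReal ε :=
    (ENNReal.lt_ofReal_iff_toReal_lt (levyProkhorovEDist_ne_top μ ν)).2 h
  have h2 := left_measure_le_of_levyProkhorovEDist_lt h1 hB
  rw [ENNReal.toReal_ofReal h0] at h2
  have h3 := ENNReal.toReal_mono (by simp) h2
  rwa [ENNReal.toReal_add (by simp) (by simp), ENNReal.toReal_ofReal h0] at h3

theorem lp_nonneg {Z : Type} [MetricSpace Z] [MeasurableSpace Z] (μ ν : Measure Z) :
    0 ≤ levyProkhorovDist μ ν := ENNReal.toReal_nonneg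

/-- Pushing two measures forward along an isometry does not increase their Prohorov distance. -/
theorem lp_map_le {Z W : Type} [MetricSpace Z] [MeasurableSpace Z] [BorelSpace Z]
    [MetricSpace W] [MeasurableSpace W] [BorelSpace W] {f : Z → W} (hf : Isometry f)
    (μ ν : Measure Z) [IsFiniteMeasure μ] [IsFiniteMeasure ν] :
    levyProkhorovDist (μ.map f) (ν.map f) ≤ levyProkhorovDist μ ν := by
  have hm : Measurable f := hf.continuous.measurable
  have key : ∀ (μ ν : Measure Z) [IsFiniteMeasure μ] [IsFiniteMeasure ν] (ε : ℝ) (B : Set W),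
      MeasurableSet B → levyProkhorovDist μ ν < ε →
      (μ.map f).real B ≤ (ν.map f).real (thickening ε B) + ε := by
    intro μ ν _ _ ε B hB h
    rw [map_measureReal_apply hm hB, map_measureReal_apply hm isOpen_thickening.measurableSet]
    refine (le_of_lp_lt μ ν h (hm hB)).trans (add_le_add_left (measureReal_mono ?_) _)
    intro z hz
    obtain ⟨y, hy, hyz⟩ := mem_thickening_iff.1 hz
    exact mem_thickening_iff.2 ⟨f y, hy, by rwa [hf.dist_eq]⟩
  exact lp_le _ _ (lp_nonneg _ _) fun ε hε B hB =>
    ⟨key μ ν ε B hB hε, key ν μ ε B hB (by rwa [levyProkhorovDist_comm])⟩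

/-! ### Elementary properties of the Gromov–Hausdorff–Prohorov distance -/

theorem ghpSet_nonneg {X Y : RWSpace} {c : ℝ} (hc : c ∈ ghpSet X Y) : 0 ≤ c := by
  obtain ⟨Z, _, _, _, Φ, Φ', -, -, -, -, rfl⟩ := hc
  have := lp_nonneg (X.vol.map Φ) (Y.vol.map Φ')
  have : 0 ≤ hausdorffDist (range Φ) (range Φ') := hausdorffDist_nonneg
  positivity

theorem dcGHP_nonneg (X Y : RWSpace) : 0 ≤ dcGHP X Y :=
  Real.sInf_nonneg fun _ => ghpSet_nonneg

theorem dcGHP_le {X Y : RWSpace} {c : ℝ} (hc : c ∈ ghpSet X Y) : dcGHP X Y ≤ c :=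
  csInf_le ⟨0, fun _ => ghpSet_nonneg⟩ hc

theorem ghpSet_nonempty {X Y : RWSpace} (hX : IsCompactRW X) (hY : IsCompactRW Y) :
    (ghpSet X Y).Nonempty := by
  have := hX.1
  have := hY.1
  have : Nonempty X.carrier := ⟨X.root⟩
  have : Nonempty Y.carrier := ⟨Y.root⟩
  let : MeasurableSpace (GromovHausdorff.OptimalGHCoupling X.carrier Y.carrier) := borel _
  have : BorelSpace (GromovHausdorff.OptimalGHCoupling X.carrier Y.carrier) := ⟨rfl⟩
  refine ⟨_, GromovHausdorff.OptimalGHCoupling X.carrier Y.carrier, inferInstance, inferInstance,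
    inferInstance,
    GromovHausdorff.optimalGHInjl X.carrier Y.carrier,
    GromovHausdorff.optimalGHInjr X.carrier Y.carrier,
    GromovHausdorff.isometry_optimalGHInjl _ _, GromovHausdorff.isometry_optimalGHInjr _ _,
    inferInstance, inferInstance, rfl⟩

theorem exists_ghpSet_lt {X Y : RWSpace} (hX : IsCompactRW X) (hY : IsCompactRW Y) {a : ℝ}
    (h : dcGHP X Y < a) : ∃ c ∈ ghpSet X Y, c < a :=
  exists_lt_of_csInf_lt (ghpSet_nonempty hX hY) h

theorem dcGHP_comm (X Y : RWSpace) : dcGHP X Y = dcGHP Y X := by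
  have key : ∀ X Y : RWSpace, ghpSet X Y ⊆ ghpSet Y X := by
    rintro X Y c ⟨Z, i1, i2, i3, Φ, Φ', h1, h2, h3, h4, rfl⟩
    exact ⟨Z, i1, i2, i3, Φ', Φ, h2, h1, h3, h4,
      by rw [hausdorffDist_comm, dist_comm, levyProkhorovDist_comm]⟩
  exact congrArg sInf ((key X Y).antisymm (key Y X))

/-- For compact spaces the Hausdorff distance in `ghpSet` is between bounded nonempty sets, hence
is not a junk value. -/
theorem hausdorffEDist_range_ne_top {X Y : RWSpace} (hX : IsCompactRW X) (hY : IsCompactRW Y)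
    {Z : Type} [MetricSpace Z] {Φ : X.carrier → Z} {Φ' : Y.carrier → Z}
    (h : Isometry Φ) (h' : Isometry Φ') : hausdorffEDist (range Φ) (range Φ') ≠ ⊤ := by
  have := hX.1
  have := hY.1
  exact hausdorffEDist_ne_top_of_nonempty_of_bounded ⟨_, X.root, rfl⟩ ⟨_, Y.root, rfl⟩
    (isCompact_range h.continuous).isBounded (isCompact_range h'.continuous).isBounded

theorem isFiniteMeasure_map {X : RWSpace} (hX : IsCompactRW X) {Z : Type} [MeasurableSpace Z]
    (Φ : X.carrier → Z) : IsFiniteMeasure (X.vol.map Φ) := by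
  have := hX.2
  infer_instance

/-- The triangle inequality: two embeddings of `(X, Y)` and `(Y, W)` are combined in the space
obtained by gluing the ambient spaces along the two copies of `Y`. -/
theorem dcGHP_triangle {X Y W : RWSpace} (hX : IsCompactRW X) (hY : IsCompactRW Y)
    (hW : IsCompactRW W) : dcGHP X W ≤ dcGHP X Y + dcGHP Y W := by
  refine le_of_forall_pos_le_add fun η hη => ?_
  obtain ⟨c, hc, hcη⟩ := exists_ghpSet_lt hX hY (lt_add_of_pos_right (dcGHP X Y) (half_pos hη))
  obtain ⟨d, hd, hdη⟩ := exists_ghpSet_lt hY hW (lt_add_of_pos_right (dcGHP Y W) (half_pos hη))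
  suffices dcGHP X W ≤ c + d by linarith
  obtain ⟨Z₁, _, _, _, Φ, Φ', hΦ, hΦ', _, _, rfl⟩ := hc
  obtain ⟨Z₂, _, _, _, Ψ, Ψ', hΨ, hΨ', _, _, rfl⟩ := hd
  have : Nonempty Y.carrier := ⟨Y.root⟩
  have : Nonempty Z₁ := ⟨Φ X.root⟩
  have : Nonempty Z₂ := ⟨Ψ Y.root⟩
  let G := GlueSpace hΦ' hΨ
  let L : Z₁ → G := toGlueL hΦ' hΨ
  let R : Z₂ → G := toGlueR hΦ' hΨ
  have hL : Isometry L := toGlueL_isometry hΦ' hΨ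
  have hR : Isometry R := toGlueR_isometry hΦ' hΨ
  have hLR : L ∘ Φ' = R ∘ Ψ := toGlue_commute hΦ' hΨ
  have hcov : range L ∪ range R = univ := by
    refine eq_univ_of_forall fun z => ?_
    obtain ⟨a | a, rfl⟩ := Quotient.mk''_surjective z
    · exact Or.inl ⟨a, rfl⟩
    · exact Or.inr ⟨a, rfl⟩
  have hcomplete : CompleteSpace G := by
    rw [completeSpace_iff_isComplete_univ, ← hcov]
    exact hL.isUniformInducing.isComplete_range.union hR.isUniformInducing.isComplete_range
  have hsep : TopologicalSpace.SeparableSpace G := by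
    rw [← TopologicalSpace.isSeparable_univ_iff, ← hcov]
    exact (TopologicalSpace.isSeparable_range hL.continuous).union
      (TopologicalSpace.isSeparable_range hR.continuous)
  let : MeasurableSpace G := borel G
  have : BorelSpace G := ⟨rfl⟩
  refine (dcGHP_le ⟨G, inferInstance, inferInstance, inferInstance, L ∘ Φ, R ∘ Ψ',
    hL.comp hΦ, hR.comp hΨ', hcomplete, hsep, rfl⟩).trans ?_
  have e1 : hausdorffDist (range (L ∘ Φ)) (range (L ∘ Φ')) = hausdorffDist (range Φ) (range Φ') := by
    rw [range_comp, range_comp, hausdorffDist_image hL]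
  have e2 : hausdorffDist (range (R ∘ Ψ)) (range (R ∘ Ψ')) = hausdorffDist (range Ψ) (range Ψ') := by
    rw [range_comp, range_comp, hausdorffDist_image hR]
  have e3 : hausdorffDist (range (L ∘ Φ)) (range (R ∘ Ψ')) ≤ _ :=
    hausdorffDist_triangle (t := range (L ∘ Φ'))
      (hausdorffEDist_range_ne_top hX hY (hL.comp hΦ) (hL.comp hΦ'))
  have e4 := dist_triangle ((L ∘ Φ) X.root) ((L ∘ Φ') Y.root) ((R ∘ Ψ') W.root)
  have := isFiniteMeasure_map hX Φ
  have := isFiniteMeasure_map hY Φ'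
  have := isFiniteMeasure_map hY Ψ
  have := isFiniteMeasure_map hW Ψ'
  have := isFiniteMeasure_map hX (L ∘ Φ)
  have := isFiniteMeasure_map hY (L ∘ Φ')
  have := isFiniteMeasure_map hW (R ∘ Ψ')
  have e5 := levyProkhorovDist_triangle (X.vol.map (L ∘ Φ)) (Y.vol.map (L ∘ Φ'))
    (W.vol.map (R ∘ Ψ'))
  have e6 := lp_map_le hL (X.vol.map Φ) (Y.vol.map Φ')
  have e7 := lp_map_le hR (Y.vol.map Ψ) (W.vol.map Ψ')
  rw [Measure.map_map hL.continuous.measurable hΦ.continuous.measurable,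
    Measure.map_map hL.continuous.measurable hΦ'.continuous.measurable] at e6
  rw [Measure.map_map hR.continuous.measurable hΨ.continuous.measurable,
    Measure.map_map hR.continuous.measurable hΨ'.continuous.measurable] at e7
  rw [e1, hLR, e2] at e3
  have e8 : dist ((L ∘ Φ) X.root) ((L ∘ Φ') Y.root) = dist (Φ X.root) (Φ' Y.root) :=
    hL.dist_eq _ _
  have e9 : dist ((L ∘ Φ') Y.root) ((R ∘ Ψ') W.root) = dist (Ψ Y.root) (Ψ' W.root) := by
    rw [hLR]; exact hR.dist_eq _ _
  rw [hLR] at e5 e6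
  linarith

/-! ### Length spaces -/

/-- In a length space, any point at distance at least `r` from `x` can be moved onto the sphere of
radius `r` around `x` along an almost geodesic curve. -/
theorem IsLengthSpace.exists_dist_eq {E : Type} [MetricSpace E] (hE : IsLengthSpace E)
    (x y : E) {r : ℝ} (hr : 0 ≤ r) (hry : r ≤ dist x y) {η : ℝ} (hη : 0 < η) :
    ∃ z, dist x z = r ∧ dist z y ≤ dist x y - r + η := by
  have h1 : (⨅ (γ : ℝ → E) (_ : ContinuousOn γ (Set.Icc 0 1)) (_ : γ 0 = x) (_ : γ 1 = y),
      eVariationOn γ (Set.Icc 0 1)) < edist x y + ENNReal.ofReal η := by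
    rw [← hE x y]
    exact ENNReal.lt_add_right (edist_ne_top _ _) (by simpa using hη)
  simp only [iInf_lt_iff] at h1
  obtain ⟨γ, hγ, h0, h1, hlt⟩ := h1
  have hc : ContinuousOn (fun t => dist x (γ t)) (Icc 0 1) :=
    (continuous_const.dist continuous_id).comp_continuousOn hγ
  obtain ⟨t, ht, htr⟩ : r ∈ (fun t => dist x (γ t)) '' Icc 0 1 := by
    refine intermediate_value_Icc zero_le_one hc ⟨?_, ?_⟩
    · simpa [h0] using hr
    · simpa [h1] using hry
  refine ⟨γ t, htr, ?_⟩
  have hv := eVariationOn.Icc_add_Icc γ (s := univ) ht.1 ht.2 (mem_univ t)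
  simp only [univ_inter] at hv
  have a1 := eVariationOn.edist_le γ (s := Icc 0 t) ⟨le_rfl, ht.1⟩ ⟨ht.1, le_rfl⟩
  have a2 := eVariationOn.edist_le γ (s := Icc t 1) ⟨le_rfl, ht.2⟩ ⟨ht.2, le_rfl⟩
  rw [h0] at a1
  rw [h1] at a2
  have a3 := ((add_le_add a1 a2).trans hv.le).trans hlt.le
  rw [edist_dist, edist_dist, edist_dist, ← ENNReal.ofReal_add dist_nonneg dist_nonneg,
    ← ENNReal.ofReal_add dist_nonneg hη.le, ENNReal.ofReal_le_ofReal_iff (by positivity)] at a3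
  simp only at htr
  linarith

theorem IsLengthSpace.exists_dist_le {E : Type} [MetricSpace E] (hE : IsLengthSpace E)
    (x y : E) {r s : ℝ} (hr : 0 ≤ r) (hrs : r ≤ s) (hy : dist y x ≤ s) {η : ℝ} (hη : 0 < η) :
    ∃ z, dist z x ≤ r ∧ dist y z ≤ s - r + η := by
  rcases le_total r (dist x y) with h | h
  · obtain ⟨z, h1, h2⟩ := hE.exists_dist_eq x y hr h hη
    refine ⟨z, (dist_comm z x).trans_le h1.le, ?_⟩
    rw [dist_comm y z]
    rw [dist_comm] at hy
    linarith
  · exact ⟨y, by rwa [dist_comm], by rw [dist_self]; linarith⟩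

/-! ### Balls around the root -/

theorem IsCompactRW.restrict {X : RWSpace} (hX : IsCompactRW X) (r : ℝ) :
    IsCompactRW (X.restrict r) := by
  have := hX.1
  have := hX.2
  exact ⟨isCompact_iff_compactSpace.1 (isClosed_closedBall (x := X.root)).isCompact,
    IsFiniteMeasure_comap _⟩

/-- An embedding of the ball `X.restrict r` coming from an embedding of `X` pushes the restricted
measure to the part of `X.vol` carried by the ball. -/
theorem map_restrict_real (X : RWSpace) {r : ℝ} (hr : 0 ≤ r) {Z : Type} [MetricSpace Z]
    [MeasurableSpace Z] [BorelSpace Z] {Φ : X.carrier → Z} (hΦ : Isometry Φ)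
    {B : Set Z} (hB : MeasurableSet B) :
    ((X.restrict r).vol.map (fun x : (X.restrict r).carrier => Φ x.1)).real B
      = X.vol.real (Φ ⁻¹' B ∩ closedBall X.root r) := by
  have hm := hΦ.continuous.measurable
  have e : (X.restrict r).vol.map (fun x : (X.restrict r).carrier => Φ x.1)
      = (X.vol.restrict (closedBall X.root (max r 0))).map Φ := by
    rw [← map_comap_subtype_coe measurableSet_closedBall, Measure.map_map hm measurable_subtype_coe]
    rfl
  rw [e, map_measureReal_apply hm hB, measureReal_restrict_apply (hm hB), max_eq_left hr]

/-- The mass of the closed ball of radius `r` around the root. -/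
noncomputable def ballMass (X : RWSpace) (r : ℝ) : ℝ := X.vol.real (closedBall X.root r)

theorem ballMass_mono {X : RWSpace} (hX : IsCompactRW X) : Monotone (ballMass X) := by
  have := hX.2
  exact fun r s h => measureReal_mono (closedBall_subset_closedBall h)

/-- Splitting the part of a set in a large ball into its part in a smaller ball and the shell. -/
theorem real_inter_ball_le {X : RWSpace} (hX : IsCompactRW X) (A : Set X.carrier) {r s : ℝ}
    (h : r ≤ s) : X.vol.real (A ∩ closedBall X.root s)
      ≤ X.vol.real (A ∩ closedBall X.root r) + (ballMass X s - ballMass X r) := by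
  have := hX.2
  rw [ballMass, ballMass, ← measureReal_sdiff (closedBall_subset_closedBall h)
    measurableSet_closedBall]
  refine (measureReal_mono ?_).trans (measureReal_union_le _ _)
  intro x hx
  by_cases hxr : x ∈ closedBall X.root r
  · exact Or.inl ⟨hx.1, hxr⟩
  · exact Or.inr ⟨hx.2, hxr⟩

/-- Increments of `r ↦ X.restrict r`, measured in the ambient space `X` itself: the length structure
controls the Hausdorff distance and the mass of the shell controls the Prohorov distance. -/
theorem dcGHP_restrict_restrict_le {X : RWSpace} (hX : IsCompactRW X)
    (hl : IsLengthSpace X.carrier) {r s : ℝ} (hr : 0 ≤ r) (hrs : r ≤ s) :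
    dcGHP (X.restrict r) (X.restrict s) ≤ (s - r) + (ballMass X s - ballMass X r) := by
  have hs := hr.trans hrs
  have := hX.1
  have := hX.2
  let Φ : (X.restrict r).carrier → X.carrier := fun x => id x.1
  let Φ' : (X.restrict s).carrier → X.carrier := fun x => id x.1
  have hΦ : Isometry Φ := isometry_subtype_coe
  have hΦ' : Isometry Φ' := isometry_subtype_coe
  refine (dcGHP_le ⟨X.carrier, inferInstance, inferInstance, inferInstance, Φ, Φ', hΦ, hΦ',
    inferInstance, inferInstance, rfl⟩).trans ?_
  have hroot : dist (Φ (X.restrict r).root) (Φ' (X.restrict s).root) = 0 := dist_self _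
  have hH : hausdorffDist (range Φ) (range Φ') ≤ s - r := by
    refine le_of_forall_pos_le_add fun η hη => hausdorffDist_le_of_mem_dist (by linarith) ?_ ?_
    · rintro _ ⟨⟨x, hx⟩, rfl⟩
      refine ⟨x, ⟨⟨x, closedBall_subset_closedBall (max_le_max_right 0 hrs) hx⟩, rfl⟩, ?_⟩
      rw [show Φ ⟨x, hx⟩ = x from rfl, dist_self]
      linarith
    · rintro _ ⟨⟨x, hx⟩, rfl⟩
      rw [max_eq_left hs] at hx
      obtain ⟨z, h1, h2⟩ := hl.exists_dist_le X.root x hr hrs hx hη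
      exact ⟨z, ⟨⟨z, by rwa [max_eq_left hr]⟩, rfl⟩, h2⟩
  have hP : levyProkhorovDist ((X.restrict r).vol.map Φ) ((X.restrict s).vol.map Φ')
      ≤ ballMass X s - ballMass X r := by
    have := isFiniteMeasure_map (hX.restrict r) Φ
    have := isFiniteMeasure_map (hX.restrict s) Φ'
    have h0 := ballMass_mono hX hrs
    refine lp_le _ _ (by linarith) fun ε hε B hB => ?_
    have hε0 : 0 < ε := by linarith
    rw [map_restrict_real X hr isometry_id hB, map_restrict_real X hs isometry_id hB,
      map_restrict_real X hr isometry_id isOpen_thickening.measurableSet,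
      map_restrict_real X hs isometry_id isOpen_thickening.measurableSet]
    have hsub := self_subset_thickening hε0 B
    constructor
    · have : X.vol.real (id ⁻¹' B ∩ closedBall X.root r)
          ≤ X.vol.real (id ⁻¹' thickening ε B ∩ closedBall X.root s) :=
        measureReal_mono (inter_subset_inter hsub (closedBall_subset_closedBall hrs))
      linarith
    · have h1 := real_inter_ball_le hX (id ⁻¹' B) hrs
      have : X.vol.real (id ⁻¹' B ∩ closedBall X.root r)
          ≤ X.vol.real (id ⁻¹' thickening ε B ∩ closedBall X.root r) :=
        measureReal_mono (inter_subset_inter hsub le_rfl)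
      linarith
  linarith

/-- The function `r ↦ dcGHP (X.restrict r) (Y.restrict r)` is the difference of two monotone
functions on `[0, ∞)`: its increments are bounded by those of a monotone function. -/
theorem measurable_dcGHP_restrict {X Y : RWSpace} (hX : IsCompactRW X) (hY : IsCompactRW Y)
    (hlX : IsLengthSpace X.carrier) (hlY : IsLengthSpace Y.carrier) :
    Measurable fun r : ℝ => dcGHP (X.restrict (max r 0)) (Y.restrict (max r 0)) := by
  let G : ℝ → ℝ := fun r => 2 * max r 0 + ballMass X (max r 0) + ballMass Y (max r 0)
  let f : ℝ → ℝ := fun r => dcGHP (X.restrict (max r 0)) (Y.restrict (max r 0))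
  have hG : Monotone G := fun r s h => by
    have h' : max r 0 ≤ max s 0 := max_le_max_right 0 h
    have h1 := ballMass_mono hX h'
    have h2 := ballMass_mono hY h'
    simp only [G]
    linarith
  have hfG : Monotone fun r => f r + G r := fun r s h => by
    have h' : max r 0 ≤ max s 0 := max_le_max_right 0 h
    have h0 : 0 ≤ max r 0 := le_max_right _ _
    have h1 := dcGHP_restrict_restrict_le hX hlX h0 h'
    have h2 := dcGHP_restrict_restrict_le hY hlY h0 h'
    rw [dcGHP_comm] at h2
    have h3 := dcGHP_triangle (hX.restrict (max r 0)) (hX.restrict (max s 0))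
      (hY.restrict (max r 0))
    have h4 := dcGHP_triangle (hX.restrict (max s 0)) (hY.restrict (max s 0))
      (hY.restrict (max r 0))
    simp only [f, G]
    linarith
  have : f = fun r => (f r + G r) - G r := by ext; ring
  change Measurable f
  rw [this]
  exact hfG.measurable.sub hG.measurable

theorem integrableOn_dGHP {X Y : RWSpace} (hX : IsCompactRW X) (hY : IsCompactRW Y)
    (hlX : IsLengthSpace X.carrier) (hlY : IsLengthSpace Y.carrier) :
    IntegrableOn (fun r => Real.exp (-r) * min (dcGHP (X.restrict r) (Y.restrict r)) 1)
      (Ioi 0) := by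
  have hm : Measurable fun r : ℝ =>
      Real.exp (-r) * min (dcGHP (X.restrict (max r 0)) (Y.restrict (max r 0))) 1 :=
    (Real.measurable_exp.comp measurable_neg).mul
      ((measurable_dcGHP_restrict hX hY hlX hlY).min measurable_const)
  have hi : IntegrableOn (fun r : ℝ =>
      Real.exp (-r) * min (dcGHP (X.restrict (max r 0)) (Y.restrict (max r 0))) 1) (Ioi 0) := by
    refine Integrable.mono' (integrableOn_exp_neg_Ioi 0) hm.aestronglyMeasurable
      (Filter.Eventually.of_forall fun r => ?_)
    have h0 : 0 ≤ min (dcGHP (X.restrict (max r 0)) (Y.restrict (max r 0))) 1 :=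
      le_min (dcGHP_nonneg _ _) zero_le_one
    rw [Real.norm_of_nonneg (by positivity)]
    exact mul_le_of_le_one_right (Real.exp_pos _).le (min_le_right _ _)
  refine hi.congr_fun (fun r hr => ?_) measurableSet_Ioi
  have hr' : (0 : ℝ) < r := hr
  simp only [max_eq_left hr'.le]

/-! ### From convergence of the spaces to convergence of the balls -/

/-- A point of the ball of radius `r` in `X` is close to a point of `Y`, a priori only in the ball of
radius `r + 2ε`; the length structure of `Y` brings it back into the ball of radius `r`. -/
theorem shell_hausdorff_aux {X Y : RWSpace} (hlY : IsLengthSpace Y.carrier)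
    {Z : Type} [MetricSpace Z] {Φ : X.carrier → Z} {Φ' : Y.carrier → Z}
    (hΦ : Isometry Φ) (hΦ' : Isometry Φ') {ε r : ℝ} (hr : 0 ≤ r) (hε : 0 < ε)
    (hroot : dist (Φ X.root) (Φ' Y.root) < ε) (hH : hausdorffDist (range Φ) (range Φ') < ε)
    (hfin : hausdorffEDist (range Φ) (range Φ') ≠ ⊤) {x : X.carrier} (hx : dist x X.root ≤ r) :
    ∃ y, dist y Y.root ≤ r ∧ dist (Φ x) (Φ' y) ≤ 4 * ε := by
  obtain ⟨_, ⟨y, rfl⟩, hxy⟩ := exists_dist_lt_of_hausdorffDist_lt (mem_range_self x) hH hfin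
  have h1 : dist y Y.root ≤ r + 2 * ε := by
    rw [← hΦ'.dist_eq]
    have a := dist_triangle4 (Φ' y) (Φ x) (Φ X.root) (Φ' Y.root)
    rw [hΦ.dist_eq, dist_comm (Φ' y) (Φ x)] at a
    linarith
  obtain ⟨z, hz, hyz⟩ := hlY.exists_dist_le Y.root y hr (by linarith) h1 hε
  refine ⟨z, hz, ?_⟩
  have a := dist_triangle (Φ x) (Φ' y) (Φ' z)
  rw [hΦ'.dist_eq] at a
  linarith

/-- The Prohorov comparison applied to the intersection of `B` with the ball of radius `s` around
the image of the root of `X`: its thickening stays in the ball of radius `s + 2ε` of `Y`. -/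
theorem shell_mass_aux {X Y : RWSpace} (hX : IsCompactRW X) (hY : IsCompactRW Y)
    {Z : Type} [MetricSpace Z] [MeasurableSpace Z] [BorelSpace Z]
    {Φ : X.carrier → Z} {Φ' : Y.carrier → Z}
    (hΦ : Isometry Φ) (hΦ' : Isometry Φ') {ε s : ℝ}
    (hroot : dist (Φ X.root) (Φ' Y.root) < ε)
    (hP : levyProkhorovDist (X.vol.map Φ) (Y.vol.map Φ') < ε) {B : Set Z} (hB : MeasurableSet B) :
    X.vol.real (Φ ⁻¹' B ∩ closedBall X.root s)
      ≤ Y.vol.real (Φ' ⁻¹' thickening ε B ∩ closedBall Y.root (s + 2 * ε)) + ε := by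
  have := hX.2
  have := hY.2
  have e := le_of_lp_lt _ _ hP (hB.inter (measurableSet_closedBall (x := Φ X.root) (ε := s)))
  rw [map_measureReal_apply hΦ.continuous.measurable (hB.inter measurableSet_closedBall),
    map_measureReal_apply hΦ'.continuous.measurable isOpen_thickening.measurableSet,
    preimage_inter, hΦ.preimage_closedBall] at e
  refine e.trans (add_le_add_left (measureReal_mono ?_) _)
  intro y hy
  obtain ⟨b, ⟨hb, hbs⟩, hyb⟩ := mem_thickening_iff.1 hy
  refine ⟨mem_thickening_iff.2 ⟨b, hb, hyb⟩, ?_⟩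
  rw [mem_closedBall, ← hΦ'.dist_eq]
  have a := dist_triangle4 (Φ' y) b (Φ X.root) (Φ' Y.root)
  rw [mem_closedBall] at hbs
  linarith

/-- If `X` and `Y` are at distance less than `ε`, their balls of radius `r` are at distance at most
a multiple of `ε` plus the mass of a shell of `Y` around the sphere of radius `r`. -/
theorem dcGHP_restrict_le {X Y : RWSpace} (hX : IsCompactRW X) (hY : IsCompactRW Y)
    (hlX : IsLengthSpace X.carrier) (hlY : IsLengthSpace Y.carrier) {ε r : ℝ} (hr : 0 ≤ r)
    (h : dcGHP X Y < ε) :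
    dcGHP (X.restrict r) (Y.restrict r)
      ≤ 6 * ε + (ballMass Y (r + 2 * ε) - ballMass Y (r - 2 * ε)) := by
  obtain ⟨c, hc, hcε⟩ := exists_ghpSet_lt hX hY h
  have hε : 0 < ε := (dcGHP_nonneg X Y).trans_lt h
  obtain ⟨Z, _, _, _, Φ, Φ', hΦ, hΦ', _, _, rfl⟩ := hc
  have n1 : 0 ≤ hausdorffDist (range Φ) (range Φ') := hausdorffDist_nonneg
  have n2 := lp_nonneg (X.vol.map Φ) (Y.vol.map Φ')
  have n3 : 0 ≤ dist (Φ X.root) (Φ' Y.root) := dist_nonneg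
  have hH : hausdorffDist (range Φ) (range Φ') < ε := by linarith
  have hroot : dist (Φ X.root) (Φ' Y.root) < ε := by linarith
  have hP : levyProkhorovDist (X.vol.map Φ) (Y.vol.map Φ') < ε := by linarith
  have hfin := hausdorffEDist_range_ne_top hX hY hΦ hΦ'
  let Ψ : (X.restrict r).carrier → Z := fun x => Φ x.1
  let Ψ' : (Y.restrict r).carrier → Z := fun x => Φ' x.1
  have hΨ : Isometry Ψ := hΦ.comp isometry_subtype_coe
  have hΨ' : Isometry Ψ' := hΦ'.comp isometry_subtype_coe
  refine (dcGHP_le ⟨Z, inferInstance, inferInstance, inferInstance, Ψ, Ψ', hΨ, hΨ',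
    inferInstance, inferInstance, rfl⟩).trans ?_
  have hroot' : dist (Ψ (X.restrict r).root) (Ψ' (Y.restrict r).root) < ε := hroot
  have hH' : hausdorffDist (range Ψ) (range Ψ') ≤ 4 * ε := by
    refine hausdorffDist_le_of_mem_dist (by linarith) ?_ ?_
    · rintro _ ⟨⟨x, hx⟩, rfl⟩
      rw [max_eq_left hr] at hx
      obtain ⟨y, hy, hxy⟩ := shell_hausdorff_aux hlY hΦ hΦ' hr hε hroot hH hfin hx
      exact ⟨Φ' y, ⟨⟨y, by rwa [max_eq_left hr]⟩, rfl⟩, hxy⟩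
    · rintro _ ⟨⟨x, hx⟩, rfl⟩
      rw [max_eq_left hr] at hx
      obtain ⟨y, hy, hxy⟩ := shell_hausdorff_aux hlX hΦ' hΦ hr hε (by rwa [dist_comm])
        (by rwa [hausdorffDist_comm]) (by rwa [hausdorffEDist_comm]) hx
      exact ⟨Φ y, ⟨⟨y, by rwa [max_eq_left hr]⟩, rfl⟩, hxy⟩
  have hP' : levyProkhorovDist ((X.restrict r).vol.map Ψ) ((Y.restrict r).vol.map Ψ')
      ≤ ε + (ballMass Y (r + 2 * ε) - ballMass Y (r - 2 * ε)) := by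
    have := hX.2
    have := hY.2
    have := isFiniteMeasure_map (hX.restrict r) Ψ
    have := isFiniteMeasure_map (hY.restrict r) Ψ'
    have m1 := ballMass_mono hY (show r - 2 * ε ≤ r by linarith)
    have m2 := ballMass_mono hY (show r ≤ r + 2 * ε by linarith)
    refine lp_le _ _ (by linarith) fun δ hδ B hB => ?_
    have hεδ : ε ≤ δ := by linarith
    rw [map_restrict_real X hr hΦ hB, map_restrict_real Y hr hΦ' hB,
      map_restrict_real X hr hΦ isOpen_thickening.measurableSet,
      map_restrict_real Y hr hΦ' isOpen_thickening.measurableSet]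
    have hsub := thickening_mono hεδ B
    constructor
    · have h1 := shell_mass_aux hX hY hΦ hΦ' (s := r) hroot hP hB
      have h2 := real_inter_ball_le hY (Φ' ⁻¹' thickening ε B) (show r ≤ r + 2 * ε by linarith)
      have h3 : Y.vol.real (Φ' ⁻¹' thickening ε B ∩ closedBall Y.root r)
          ≤ Y.vol.real (Φ' ⁻¹' thickening δ B ∩ closedBall Y.root r) :=
        measureReal_mono (inter_subset_inter (preimage_mono hsub) le_rfl)
      linarith
    · have h1 := shell_mass_aux hY hX hΦ' hΦ (s := r - 2 * ε) (by rwa [dist_comm])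
        (by rwa [levyProkhorovDist_comm]) hB
      rw [sub_add_cancel] at h1
      have h2 := real_inter_ball_le hY (Φ' ⁻¹' B) (show r - 2 * ε ≤ r by linarith)
      have h3 : X.vol.real (Φ ⁻¹' thickening ε B ∩ closedBall X.root r)
          ≤ X.vol.real (Φ ⁻¹' thickening δ B ∩ closedBall X.root r) :=
        measureReal_mono (inter_subset_inter (preimage_mono hsub) le_rfl)
      linarith
  linarith

/-- Balls converge at every radius where the ball mass of the limit is continuous. -/
theorem tendsto_dcGHP_restrict {Xn : ℕ → RWSpace} {X : RWSpace}
    (hn : ∀ n, IsCompactRW (Xn n) ∧ IsLLC (Xn n)) (hX : IsCompactRW X ∧ IsLLC X)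
    (h : Filter.Tendsto (fun n => dcGHP (Xn n) X) Filter.atTop (nhds 0)) {r : ℝ} (hr : 0 ≤ r)
    (hc : ContinuousAt (ballMass X) r) :
    Filter.Tendsto (fun n => dcGHP ((Xn n).restrict r) (X.restrict r)) Filter.atTop (nhds 0) := by
  have hbound : Filter.Tendsto (fun ε : ℝ => 6 * ε +
      (ballMass X (r + 2 * ε) - ballMass X (r - 2 * ε))) (nhds 0) (nhds 0) := by
    have t1 : Filter.Tendsto (fun ε : ℝ => r + 2 * ε) (nhds 0) (nhds r) :=
      Continuous.tendsto' (by fun_prop) _ _ (by simp)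
    have t2 : Filter.Tendsto (fun ε : ℝ => r - 2 * ε) (nhds 0) (nhds r) :=
      Continuous.tendsto' (by fun_prop) _ _ (by simp)
    have t3 : Filter.Tendsto (fun ε : ℝ => 6 * ε) (nhds 0) (nhds 0) :=
      Continuous.tendsto' (by fun_prop) _ _ (by simp)
    simpa using t3.add ((hc.tendsto.comp t1).sub (hc.tendsto.comp t2))
  -- The radius of comparison must strictly exceed the distance, hence the term `1 / (n + 1)`.
  have hε : Filter.Tendsto (fun n : ℕ => dcGHP (Xn n) X + 1 / ((n : ℝ) + 1)) Filter.atTop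
      (nhds 0) := by
    simpa using h.add tendsto_one_div_add_atTop_nhds_zero_nat
  refine squeeze_zero (fun n => dcGHP_nonneg _ _) (fun n => ?_) (hbound.comp hε)
  exact dcGHP_restrict_le (hn n).1 hX.1 (hn n).2.2.2.1 hX.2.2.2.1 hr
    (lt_add_of_pos_right _ (by positivity))

/-! ### From convergence of the balls to convergence of the spaces -/

/-- If the balls of radius `r` exhaust `X` and `Y`, restricting to them changes nothing. -/
theorem dcGHP_le_restrict {X Y : RWSpace} (hX : IsCompactRW X) (hY : IsCompactRW Y) {r : ℝ}
    (hrX : ∀ x, dist x X.root ≤ r) (hrY : ∀ y, dist y Y.root ≤ r) :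
    dcGHP X Y ≤ dcGHP (X.restrict r) (Y.restrict r) := by
  refine le_csInf (ghpSet_nonempty (hX.restrict r) (hY.restrict r)) ?_
  rintro c ⟨Z, i1, i2, i3, Φ, Φ', hΦ, hΦ', h3, h4, rfl⟩
  have key : ∀ X : RWSpace, (∀ x, dist x X.root ≤ r) →
      ∃ j : X.carrier → (X.restrict r).carrier, Isometry j ∧ Function.Surjective j ∧
        j X.root = (X.restrict r).root ∧ X.vol.map j = (X.restrict r).vol := by
    intro X hrX
    let j : X.carrier → (X.restrict r).carrier := fun x => ⟨x, (hrX x).trans (le_max_left _ _)⟩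
    have hj : Isometry j := fun _ _ => rfl
    refine ⟨j, hj, fun x => ⟨x.1, rfl⟩, rfl, ?_⟩
    ext s hs
    rw [Measure.map_apply hj.continuous.measurable hs]
    have hemb : MeasurableEmbedding
        (Subtype.val : closedBall X.root (max r 0) → X.carrier) :=
      MeasurableEmbedding.subtype_coe measurableSet_closedBall
    refine Eq.trans ?_ (hemb.comap_apply X.vol s).symm
    congr 1
    ext x
    exact ⟨fun hx => ⟨j x, hx, rfl⟩, by rintro ⟨y, hy, rfl⟩; exact hy⟩
  obtain ⟨j, hj, sj, rj, mj⟩ := key X hrX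
  obtain ⟨k, hk, sk, rk, mk⟩ := key Y hrY
  refine dcGHP_le ⟨Z, i1, i2, i3, Φ ∘ j, Φ' ∘ k, hΦ.comp hj, hΦ'.comp hk, h3, h4, ?_⟩
  rw [sj.range_comp, sk.range_comp, Function.comp_apply, Function.comp_apply, rj, rk,
    ← Measure.map_map hΦ.continuous.measurable hj.continuous.measurable,
    ← Measure.map_map hΦ'.continuous.measurable hk.continuous.measurable, mj, mk]

/-- Beyond the radius `D` of `Y`, closeness of the balls forces `X` itself to be contained in its
ball of radius `r`: otherwise, `X` being a length space, it would have a point at distance exactly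
`r` from its root, too far from every point of `Y`. -/
theorem min_dcGHP_le_restrict {X Y : RWSpace} (hX : IsCompactRW X) (hY : IsCompactRW Y)
    (hlX : IsLengthSpace X.carrier) {D r : ℝ} (hD : ∀ y, dist y Y.root ≤ D)
    (hr : D + 1 ≤ r) :
    min (dcGHP X Y) (1 / 4) ≤ dcGHP (X.restrict r) (Y.restrict r) := by
  have hD0 : 0 ≤ D := dist_nonneg.trans (hD Y.root)
  have hr0 : 0 ≤ r := by linarith
  rcases le_or_gt (1 / 4) (dcGHP (X.restrict r) (Y.restrict r)) with h | h
  · exact (min_le_right _ _).trans h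
  refine (min_le_left _ _).trans (dcGHP_le_restrict hX hY (fun x => ?_)
    fun y => (hD y).trans (by linarith))
  by_contra hx
  obtain ⟨z, hz, -⟩ := hlX.exists_dist_eq X.root x hr0
    (by rw [dist_comm]; exact (not_le.1 hx).le) one_pos
  obtain ⟨c, ⟨Z, _, _, _, Φ, Φ', hΦ, hΦ', _, _, rfl⟩, hc⟩ :=
    exists_ghpSet_lt (hX.restrict r) (hY.restrict r) h
  have n1 : 0 ≤ hausdorffDist (range Φ) (range Φ') := hausdorffDist_nonneg
  have n2 := lp_nonneg ((X.restrict r).vol.map Φ) ((Y.restrict r).vol.map Φ')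
  have n3 : 0 ≤ dist (Φ (X.restrict r).root) (Φ' (Y.restrict r).root) := dist_nonneg
  let z' : (X.restrict r).carrier :=
    ⟨z, by rw [mem_closedBall, dist_comm, hz]; exact le_max_left _ _⟩
  obtain ⟨_, ⟨y, rfl⟩, hzy⟩ := exists_dist_lt_of_hausdorffDist_lt (r := 1 / 4)
    (mem_range_self z') (by linarith)
    (hausdorffEDist_range_ne_top (hX.restrict r) (hY.restrict r) hΦ hΦ')
  have a := dist_triangle4 (Φ (X.restrict r).root) (Φ' (Y.restrict r).root) (Φ' y) (Φ z')
  rw [hΦ.dist_eq, hΦ'.dist_eq, dist_comm (Φ' y)] at a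
  have b : dist (X.restrict r).root z' = r := hz
  have d : dist (Y.restrict r).root y ≤ D := by
    rw [dist_comm]; exact hD y.1
  linarith

/-- The bound of `min_dcGHP_le_restrict` integrated over the unit interval `[D + 1, D + 2]`. -/
theorem min_dcGHP_le_dGHP {X Y : RWSpace} (hX : IsCompactRW X) (hY : IsCompactRW Y)
    (hlX : IsLengthSpace X.carrier) (hlY : IsLengthSpace Y.carrier) {D : ℝ}
    (hD : ∀ y, dist y Y.root ≤ D) :
    Real.exp (-(D + 2)) * min (dcGHP X Y) (1 / 4) ≤ dGHP X Y := by
  have hD0 : 0 ≤ D := dist_nonneg.trans (hD Y.root)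
  have hint := integrableOn_dGHP hX hY hlX hlY
  have hsub : Icc (D + 1) (D + 2) ⊆ Ioi 0 := fun r hr => by
    have := hr.1
    simp only [mem_Ioi]
    linarith
  have hnn : ∀ r, 0 ≤ Real.exp (-r) * min (dcGHP (X.restrict r) (Y.restrict r)) 1 := fun r =>
    mul_nonneg (Real.exp_pos _).le (le_min (dcGHP_nonneg _ _) zero_le_one)
  have h1 : ∫ r in Icc (D + 1) (D + 2),
      Real.exp (-r) * min (dcGHP (X.restrict r) (Y.restrict r)) 1 ≤ dGHP X Y :=
    setIntegral_mono_set hint (Filter.Eventually.of_forall hnn) hsub.eventuallyLE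
  have h2 : ∫ _ in Icc (D + 1) (D + 2), Real.exp (-(D + 2)) * min (dcGHP X Y) (1 / 4)
      ≤ ∫ r in Icc (D + 1) (D + 2),
        Real.exp (-r) * min (dcGHP (X.restrict r) (Y.restrict r)) 1 := by
    refine setIntegral_mono_on (integrableOn_const (by simp)) (hint.mono_set hsub)
      measurableSet_Icc fun r hr => ?_
    refine mul_le_mul (Real.exp_le_exp.2 (by linarith [hr.2])) ?_
      (le_min (dcGHP_nonneg _ _) (by norm_num)) (Real.exp_pos _).le
    refine le_min (min_dcGHP_le_restrict hX hY hlX hD hr.1) ((min_le_right _ _).trans (by norm_num))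
  rw [setIntegral_const] at h2
  have : volume.real (Icc (D + 1) (D + 2)) = 1 := by
    rw [Real.volume_real_Icc_of_le (by linarith)]; ring
  rw [this, one_smul] at h2
  exact h2.trans h1

/-- Theorem 2.10 (Abraham–Delmas–Hoscheit): on 𝕂 ∩ 𝕃, the metrics `d^c_GHP` and `d_GHP`
define the same notion of convergence: a sequence of compact rooted weighted complete
locally compact length spaces converges to such a space for `d^c_GHP` if and only if it
converges for `d_GHP`. -/
theorem dcGHP_tendsto_iff_dGHP_tendsto (Xn : ℕ → RWSpace) (X : RWSpace)
    (hn : ∀ n, IsCompactRW (Xn n) ∧ IsLLC (Xn n)) (hX : IsCompactRW X ∧ IsLLC X) :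
    Filter.Tendsto (fun n => dcGHP (Xn n) X) Filter.atTop (nhds 0) ↔
      Filter.Tendsto (fun n => dGHP (Xn n) X) Filter.atTop (nhds 0) := by
  constructor
  · intro h
    have hlim : ∀ᵐ r ∂(volume.restrict (Ioi (0 : ℝ))), Filter.Tendsto (fun n =>
        Real.exp (-r) * min (dcGHP ((Xn n).restrict r) (X.restrict r)) 1) Filter.atTop
        (nhds 0) := by
      have hae := (ballMass_mono hX.1).countable_not_continuousAt.ae_notMem volume
      filter_upwards [ae_restrict_mem measurableSet_Ioi, ae_restrict_of_ae hae] with r hr hc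
      have hr' : (0 : ℝ) < r := hr
      have ht := tendsto_dcGHP_restrict hn hX h hr'.le (not_not.1 hc)
      simpa using (ht.min (tendsto_const_nhds (x := (1 : ℝ)))).const_mul (Real.exp (-r))
    have key := tendsto_integral_of_dominated_convergence (fun r => Real.exp (-r))
      (fun n => (integrableOn_dGHP (hn n).1 hX.1 (hn n).2.2.2.1
        hX.2.2.2.1).aestronglyMeasurable)
      (integrableOn_exp_neg_Ioi 0) (fun n => Filter.Eventually.of_forall fun r => ?_) hlim
    · rw [integral_zero] at key
      exact key
    · have h0 : 0 ≤ min (dcGHP ((Xn n).restrict r) (X.restrict r)) 1 :=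
        le_min (dcGHP_nonneg _ _) zero_le_one
      rw [Real.norm_of_nonneg (by positivity)]
      exact mul_le_of_le_one_right (Real.exp_pos _).le (min_le_right _ _)
  · intro h
    obtain ⟨D, hD⟩ : ∃ D, ∀ x, dist x X.root ≤ D := by
      have := hX.1.1
      obtain ⟨D, hD⟩ := (isCompact_univ (X := X.carrier)).isBounded.subset_closedBall X.root
      exact ⟨D, fun x => hD (mem_univ x)⟩
    have h1 : Filter.Tendsto (fun n => min (dcGHP (Xn n) X) (1 / 4)) Filter.atTop (nhds 0) := by
      refine squeeze_zero (g := fun n => Real.exp (D + 2) * dGHP (Xn n) X)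
        (fun n => le_min (dcGHP_nonneg _ _) (by norm_num)) (fun n => ?_)
        (by simpa using h.const_mul (Real.exp (D + 2)))
      have := mul_le_mul_of_nonneg_left (min_dcGHP_le_dGHP (hn n).1 hX.1 (hn n).2.2.2.1
        hX.2.2.2.1 hD) (Real.exp_pos (D + 2)).le
      rwa [← mul_assoc, ← Real.exp_add, add_neg_cancel, Real.exp_zero, one_mul] at this
    refine h1.congr' ?_
    filter_upwards [h1.eventually_lt_const (show (0 : ℝ) < 1 / 4 by norm_num)] with n hlt
    exact min_eq_left ((min_lt_iff.1 hlt).resolve_right (lt_irrefl _)).le
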